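/- arXiv:2509.24337 — 2 statements merged into one kernel-verified Lean document; each statement's English description precedes it below -/
import Mathlib

section
/- Assume α₋ is invertible. Define, on the Hilbert space X := X₋ ⊕ X₊, the block operators A := diag(α₋⁻¹, α₊), B := column(α₋⁻¹β₋, β₊) ∈ B(U, X), C := row(−γ₋α₋⁻¹, γ₊) ∈ B(X, U), and D := δ − γ₋α₋⁻¹β₋ ∈ B(U). Then for every z ∈ ℂ such that zI − α₋ and I − zα₊ are invertible, the operator I − zA is invertible and D + zC(I − zA)⁻¹B = δ + z·γ₊(I − zα₊)⁻¹β₊ + γ₋(zI − α₋)⁻¹β₋; in particular, the stable representation R(z) coincides with the transfer function of the dichotomous system determined by (A, B, C, D), and R has no pole at 0. -/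
open Metric ContinuousLinearMap

noncomputable section

variable {U Xp Xm : Type*}
  [NormedAddCommGroup U] [InnerProductSpace ℂ U] [CompleteSpace U]
  [NormedAddCommGroup Xp] [InnerProductSpace ℂ Xp] [CompleteSpace Xp]
  [NormedAddCommGroup Xm] [InnerProductSpace ℂ Xm] [CompleteSpace Xm]

/-- The stable representation
`R(z) = δ + z·γ₊(I − zα₊)⁻¹β₊ + γ₋(zI − α₋)⁻¹β₋`. -/
def Rfun (δ : U →L[ℂ] U) (γp : Xp →L[ℂ] U) (αp : Xp →L[ℂ] Xp) (βp : U →L[ℂ] Xp)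
    (γm : Xm →L[ℂ] U) (αm : Xm →L[ℂ] Xm) (βm : U →L[ℂ] Xm) (z : ℂ) : U →L[ℂ] U :=
  δ + z • ((γp ∘L Ring.inverse (1 - z • αp)) ∘L βp) +
    (γm ∘L Ring.inverse (z • (1 : Xm →L[ℂ] Xm) - αm)) ∘L βm

/-!
A block diagonal system is a parallel connection, so its transfer function is the sum of those of
its blocks; the block `α₊` contributes `δ + z γ₊ (1 - z α₊)⁻¹ β₊` as it stands. For the block
`a⁻¹`, where `a = α₋`, the identity `a (1 - z a⁻¹) = -(z - a)` shows that `1 - z a⁻¹` is invertible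
and that `(1 - z a⁻¹)⁻¹ a⁻¹ = -(z - a)⁻¹`. On the other hand `b + z b (1 - z b)⁻¹ b = (1 - z b)⁻¹ b`
whenever `1 - z b` is invertible; at `b = a⁻¹` this absorbs the feedthrough `-γ₋ a⁻¹ β₋` and leaves
`γ₋ (z - a)⁻¹ β₋`.
-/

theorem ringInverse_neg {M₀ : Type*} [MonoidWithZero M₀] [HasDistribNeg M₀] (a : M₀) :
    Ring.inverse (-a) = -Ring.inverse a := by
  by_cases ha : IsUnit a
  · obtain ⟨u, rfl⟩ := ha
    rw [← Units.val_neg, Ring.inverse_unit, Ring.inverse_unit, inv_neg, Units.val_neg]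
  · rw [Ring.inverse_non_unit a ha, Ring.inverse_non_unit (-a) (mt (IsUnit.neg_iff a).1 ha),
      neg_zero]

section Resolvent

variable {R A : Type*} [CommSemiring R] [Ring A] [Algebra R A] {a b : A} {z : R}

theorem mul_one_sub_smul_ringInverse (ha : IsUnit a) :
    a * (1 - z • Ring.inverse a) = -(z • 1 - a) := by
  rw [mul_sub, mul_one, mul_smul_comm, Ring.mul_inverse_cancel a ha, neg_sub]

theorem isUnit_one_sub_smul_ringInverse_iff (ha : IsUnit a) :
    IsUnit (1 - z • Ring.inverse a) ↔ IsUnit (z • 1 - a) := by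
  rw [← ha.mul_left_iff, mul_one_sub_smul_ringInverse ha, IsUnit.neg_iff]

theorem ringInverse_one_sub_smul_ringInverse_mul_ringInverse (ha : IsUnit a) :
    Ring.inverse (1 - z • Ring.inverse a) * Ring.inverse a = -Ring.inverse (z • 1 - a) := by
  rw [← Ring.inverse_mul (Or.inl ha), mul_one_sub_smul_ringInverse ha, ringInverse_neg]

theorem add_smul_mul_ringInverse_one_sub_smul_mul (hb : IsUnit (1 - z • b)) :
    b + z • (b * Ring.inverse (1 - z • b) * b) = Ring.inverse (1 - z • b) * b := by
  set c := Ring.inverse (1 - z • b) with hc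
  calc b + z • (b * c * b) = ((1 - z • b) * c + z • b * c) * b := by
        rw [hc, Ring.mul_inverse_cancel _ hb, add_mul, one_mul, smul_mul_assoc, smul_mul_assoc]
    _ = c * b := by rw [← add_mul, sub_add_cancel, one_mul]

end Resolvent

section BlockOperators

variable {R E E' F F' V W : Type*} [Semiring R]
  [AddCommMonoid E] [Module R E] [TopologicalSpace E]
  [AddCommMonoid F] [Module R F] [TopologicalSpace F]

theorem isUnit_prodMap {S : E →L[R] E} {T : F →L[R] F} (hS : IsUnit S) (hT : IsUnit T) :
    IsUnit (S.prodMap T) := by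
  obtain ⟨s, rfl⟩ := hS
  obtain ⟨t, rfl⟩ := hT
  exact ((ContinuousLinearEquiv.unitsEquiv R (E × F)).symm
    ((ContinuousLinearEquiv.unitsEquiv R E s).prodCongr
      (ContinuousLinearEquiv.unitsEquiv R F t))).isUnit

theorem ringInverse_prodMap {S : E →L[R] E} {T : F →L[R] F} (hS : IsUnit S) (hT : IsUnit T) :
    Ring.inverse (S.prodMap T) = (Ring.inverse S).prodMap (Ring.inverse T) := by
  obtain ⟨s, rfl⟩ := hS
  obtain ⟨t, rfl⟩ := hT
  rw [Ring.inverse_unit, Ring.inverse_unit]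
  exact Ring.inverse_unit ((ContinuousLinearEquiv.unitsEquiv R (E × F)).symm
    ((ContinuousLinearEquiv.unitsEquiv R E s).prodCongr
      (ContinuousLinearEquiv.unitsEquiv R F t)))

variable [AddCommMonoid E'] [Module R E'] [TopologicalSpace E']
  [AddCommMonoid F'] [Module R F'] [TopologicalSpace F']
  [AddCommMonoid V] [Module R V] [TopologicalSpace V]
  [AddCommMonoid W] [Module R W] [TopologicalSpace W]

theorem coprod_comp_prodMap_comp_prod [ContinuousAdd W] (S : E →L[R] E') (T : F →L[R] F')
    (B₁ : V →L[R] E) (B₂ : V →L[R] F) (C₁ : E' →L[R] W) (C₂ : F' →L[R] W) :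
    ((C₁.coprod C₂) ∘L (S.prodMap T)) ∘L (B₁.prod B₂) = (C₁ ∘L S) ∘L B₁ + (C₂ ∘L T) ∘L B₂ :=
  rfl

end BlockOperators

section TransferFunction

variable {R E F V W : Type*} [CommRing R]
  [AddCommGroup E] [Module R E] [TopologicalSpace E]
  [AddCommGroup F] [Module R F] [TopologicalSpace F]
  [AddCommGroup V] [Module R V] [TopologicalSpace V]
  [AddCommGroup W] [Module R W] [TopologicalSpace W]
  [IsTopologicalAddGroup E] [ContinuousConstSMul R E]
  [IsTopologicalAddGroup F] [ContinuousConstSMul R F]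

theorem one_sub_smul_prodMap (S : E →L[R] E) (T : F →L[R] F) (z : R) :
    1 - z • S.prodMap T = (1 - z • S).prodMap (1 - z • T) := rfl

variable [IsTopologicalAddGroup W] [ContinuousConstSMul R W]

/-- The transfer function `z ↦ D + z C (1 - z A)⁻¹ B` of the discrete-time system with state
operator `A`, input operator `B`, output operator `C` and feedthrough `D`. Where `1 - z A` is not
invertible, `Ring.inverse` makes its value `D`. -/
def transferFunction (A : E →L[R] E) (B : V →L[R] E) (C : E →L[R] W) (D : V →L[R] W) (z : R) :
    V →L[R] W :=
  D + z • ((C ∘L Ring.inverse (1 - z • A)) ∘L B)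

theorem transferFunction_prodMap {A₁ : E →L[R] E} {A₂ : F →L[R] F} {z : R}
    (h₁ : IsUnit (1 - z • A₁)) (h₂ : IsUnit (1 - z • A₂))
    (B₁ : V →L[R] E) (B₂ : V →L[R] F) (C₁ : E →L[R] W) (C₂ : F →L[R] W) (D₁ D₂ : V →L[R] W) :
    transferFunction (A₁.prodMap A₂) (B₁.prod B₂) (C₁.coprod C₂) (D₁ + D₂) z =
      transferFunction A₁ B₁ C₁ D₁ z + transferFunction A₂ B₂ C₂ D₂ z := by
  unfold transferFunction
  rw [one_sub_smul_prodMap, ringInverse_prodMap h₁ h₂, coprod_comp_prodMap_comp_prod, smul_add,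
    add_add_add_comm]

theorem transferFunction_ringInverse {α : E →L[R] E} {z : R} (hα : IsUnit α)
    (hz : IsUnit (z • 1 - α)) (β : V →L[R] E) (γ : E →L[R] W) :
    transferFunction (Ring.inverse α) (Ring.inverse α ∘L β) (-(γ ∘L Ring.inverse α))
        (-((γ ∘L Ring.inverse α) ∘L β)) z =
      (γ ∘L Ring.inverse (z • 1 - α)) ∘L β := by
  have hunit : IsUnit (1 - z • Ring.inverse α) := (isUnit_one_sub_smul_ringInverse_iff hα).2 hz
  have hinv : Ring.inverse (z • 1 - α) =
      -(Ring.inverse α +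
        z • (Ring.inverse α * Ring.inverse (1 - z • Ring.inverse α) * Ring.inverse α)) := by
    rw [add_smul_mul_ringInverse_one_sub_smul_mul hunit,
      ringInverse_one_sub_smul_ringInverse_mul_ringInverse hα, neg_neg]
  simp only [transferFunction, hinv, comp_neg, neg_comp, comp_add, add_comp, comp_smul, smul_comp,
    mul_def, comp_assoc, smul_neg, neg_add]

theorem stableRepresentation_eq_dichotomous_transfer_general
    (δ : V →L[R] W) (γp : F →L[R] W) (αp : F →L[R] F) (βp : V →L[R] F)
    (γm : E →L[R] W) {αm : E →L[R] E} (βm : V →L[R] E) (hαm : IsUnit αm)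
    {z : R} (hzm : IsUnit (z • 1 - αm)) (hzp : IsUnit (1 - z • αp)) :
    IsUnit (1 - z • (Ring.inverse αm).prodMap αp) ∧
      transferFunction ((Ring.inverse αm).prodMap αp) ((Ring.inverse αm ∘L βm).prod βp)
          ((-(γm ∘L Ring.inverse αm)).coprod γp) (δ - (γm ∘L Ring.inverse αm) ∘L βm) z =
        δ + z • ((γp ∘L Ring.inverse (1 - z • αp)) ∘L βp) +
          (γm ∘L Ring.inverse (z • 1 - αm)) ∘L βm := by
  have hinv : IsUnit (1 - z • Ring.inverse αm) := (isUnit_one_sub_smul_ringInverse_iff hαm).2 hzm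
  refine ⟨one_sub_smul_prodMap (Ring.inverse αm) αp z ▸ isUnit_prodMap hinv hzp, ?_⟩
  rw [sub_eq_neg_add, transferFunction_prodMap hinv hzp, transferFunction_ringInverse hαm hzm,
    transferFunction, add_comm]

end TransferFunction

/-- If `α₋` is invertible, then the stable representation `R(z)` coincides with the
transfer function `D + zC(I − zA)⁻¹B` of the dichotomous system determined by
`A = diag(α₋⁻¹, α₊)`, `B = col(α₋⁻¹β₋, β₊)`, `C = row(−γ₋α₋⁻¹, γ₊)`,
`D = δ − γ₋α₋⁻¹β₋`, wherever `zI − α₋` and `I − zα₊` are invertible; in particular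
`I − zA` is then invertible.  (In particular, `R` has no pole at `0`.) -/
theorem stableRepresentation_eq_dichotomous_transfer
    (δ : U →L[ℂ] U) (γp : Xp →L[ℂ] U) (αp : Xp →L[ℂ] Xp) (βp : U →L[ℂ] Xp)
    (γm : Xm →L[ℂ] U) (αm : Xm →L[ℂ] Xm) (βm : U →L[ℂ] Xm)
    (hαp : spectrum ℂ αp ⊆ ball (0 : ℂ) 1) (hαm : spectrum ℂ αm ⊆ ball (0 : ℂ) 1)
    (hαmUnit : IsUnit αm)
    (A : (Xm × Xp) →L[ℂ] (Xm × Xp)) (hA : A = (Ring.inverse αm).prodMap αp)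
    (B : U →L[ℂ] (Xm × Xp)) (hB : B = (Ring.inverse αm ∘L βm).prod βp)
    (C : (Xm × Xp) →L[ℂ] U) (hC : C = (-(γm ∘L Ring.inverse αm)).coprod γp)
    (D : U →L[ℂ] U) (hDdef : D = δ - (γm ∘L Ring.inverse αm) ∘L βm) :
    ∀ z : ℂ, IsUnit (z • (1 : Xm →L[ℂ] Xm) - αm) → IsUnit ((1 : Xp →L[ℂ] Xp) - z • αp) →
      IsUnit ((1 : (Xm × Xp) →L[ℂ] (Xm × Xp)) - z • A) ∧
      D + z • ((C ∘L Ring.inverse (1 - z • A)) ∘L B) = Rfun δ γp αp βp γm αm βm z := by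
  intro z hzm hzp
  subst hA hB hC hDdef
  exact stableRepresentation_eq_dichotomous_transfer_general δ γp αp βp γm βm hαmUnit hzm hzp
end
end

section
/- Assume α₋ is invertible. Then: (1) if there exists a Q ∈ B(X₊, X₋) such that δ − γ₋Qβ₊ is invertible but α₋° := α₋ − (β₋ − α₋Qβ₊)(δ − γ₋Qβ₊)⁻¹γ₋ is not invertible, then R(0) = δ − γ₋α₋⁻¹β₋ is not invertible; (2) if R(0) is not invertible, then for every Q ∈ B(X₊, X₋) with δ − γ₋Qβ₊ invertible, the operator α₋° := α₋ − (β₋ − α₋Qβ₊)(δ − γ₋Qβ₊)⁻¹γ₋ is not invertible. -/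
open Metric ContinuousLinearMap

noncomputable section

variable {U Xp Xm : Type*}
  [NormedAddCommGroup U] [InnerProductSpace ℂ U] [CompleteSpace U]
  [NormedAddCommGroup Xp] [InnerProductSpace ℂ Xp] [CompleteSpace Xp]
  [NormedAddCommGroup Xm] [InnerProductSpace ℂ Xm] [CompleteSpace Xm]

/-!
Both `R(0)` and `α₋°` are Schur complements. In the block operator `[α₋ β₋; γ₋ δ]`, subtracting the
first block column times `Qβ₊` from the second gives `[α₋ β₋ - α₋Qβ₊; γ₋ δ - γ₋Qβ₊]` and does not
change the Schur complement `R(0)` of `α₋`. The Schur complement of `δ - γ₋Qβ₊` in the new block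
operator is `α₋°`, and the two Schur complements of a block operator with invertible diagonal blocks
are invertible together, because `1 - P S` is invertible if and only if `1 - S P` is.
-/

section SchurComplement

variable {R E F : Type*} [Ring R]
  [AddCommGroup E] [Module R E] [TopologicalSpace E]
  [AddCommGroup F] [Module R F] [TopologicalSpace F] [IsTopologicalAddGroup F]

/-- The Schur complement `D - C A⁻¹ B` of `A` in the block operator `[A B; C D]`. Since
`Ring.inverse` vanishes on non-units, it is meaningful only for invertible `A`. -/
def schurComplement (A : E →L[R] E) (B : F →L[R] E) (C : E →L[R] F) (D : F →L[R] F) : F →L[R] F :=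
  D - (C ∘L Ring.inverse A) ∘L B

variable {A : E →L[R] E} {B : F →L[R] E} {C : E →L[R] F} {D : F →L[R] F}

theorem isUnit_schurComplement_iff_isUnit_one_sub (hD : IsUnit D) :
    IsUnit (schurComplement A B C D) ↔
      IsUnit (1 - (Ring.inverse D ∘L C) ∘L (Ring.inverse A ∘L B)) := by
  have factorization : schurComplement A B C D =
      D * (1 - (Ring.inverse D ∘L C) ∘L (Ring.inverse A ∘L B)) := by
    rw [mul_sub, mul_one]
    exact congrArg (D - ·)
      (Ring.mul_inverse_cancel_left D ((C ∘L Ring.inverse A) ∘L B) hD).symm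
  rw [factorization, hD.mul_left_iff]

variable [IsTopologicalAddGroup E]

-- The inverse comes from the formal Neumann series `∑ (P S)ⁿ = 1 + P (∑ (S P)ⁿ) S`.
theorem isUnit_one_sub_comp_swap {P : F →L[R] E} {S : E →L[R] F} (h : IsUnit (1 - S ∘L P)) :
    IsUnit (1 - P ∘L S) := by
  obtain ⟨T, hT_right, hT_left⟩ := isUnit_iff_exists.mp h
  refine isUnit_iff_exists.mpr ⟨1 + P ∘L T ∘L S, ?_, ?_⟩
  · calc
      (1 - P ∘L S) * (1 + P ∘L T ∘L S) = 1 + P ∘L ((1 - S ∘L P) * T - 1) ∘L S := by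
        ext x
        simp only [mul_apply_eq_comp, add_apply, one_apply_eq_self, comp_apply, sub_apply,
          map_add, map_sub, comp_sub, sub_comp]
        abel
      _ = 1 := by simp [hT_right]
  · calc
      (1 + P ∘L T ∘L S) * (1 - P ∘L S) = 1 + P ∘L (T * (1 - S ∘L P) - 1) ∘L S := by
        ext x
        simp only [mul_apply_eq_comp, add_apply, one_apply_eq_self, comp_apply, sub_apply,
          map_sub, comp_sub, sub_comp]
        abel
      _ = 1 := by simp [hT_left]

theorem isUnit_one_sub_comp_comm {P : F →L[R] E} {S : E →L[R] F} :
    IsUnit (1 - P ∘L S) ↔ IsUnit (1 - S ∘L P) :=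
  ⟨isUnit_one_sub_comp_swap, isUnit_one_sub_comp_swap⟩

theorem isUnit_schurComplement_comm (hA : IsUnit A) (hD : IsUnit D) :
    IsUnit (schurComplement A B C D) ↔ IsUnit (schurComplement D C B A) := by
  rw [isUnit_schurComplement_iff_isUnit_one_sub hD, isUnit_schurComplement_iff_isUnit_one_sub hA,
    isUnit_one_sub_comp_comm]

theorem schurComplement_sub_comp (hA : IsUnit A) (K : F →L[R] E) :
    schurComplement A (B - A ∘L K) C (D - C ∘L K) = schurComplement A B C D := by
  have inverse_apply (x : E) : Ring.inverse A (A x) = x :=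
    DFunLike.congr_fun (Ring.inverse_mul_cancel A hA) x
  ext y
  simp [schurComplement, inverse_apply]

theorem alphaMcirc_not_invertible_iff_R0_not_invertible_general
    (δ : F →L[R] F) (γm : E →L[R] F) {αm : E →L[R] E} (βm K : F →L[R] E)
    (hαm : IsUnit αm) (hK : IsUnit (δ - γm ∘L K)) :
    ¬ IsUnit (αm - ((βm - αm ∘L K) ∘L Ring.inverse (δ - γm ∘L K)) ∘L γm) ↔
      ¬ IsUnit (δ - (γm ∘L Ring.inverse αm) ∘L βm) := by
  change ¬ IsUnit (schurComplement (δ - γm ∘L K) γm (βm - αm ∘L K) αm) ↔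
    ¬ IsUnit (schurComplement αm βm γm δ)
  rw [isUnit_schurComplement_comm hK hαm, schurComplement_sub_comp hαm]

end SchurComplement

/-- Assume `α₋` invertible. (1) If some `Q` has `δ − γ₋Qβ₊` invertible but
`α₋° = α₋ − (β₋ − α₋Qβ₊)(δ − γ₋Qβ₊)⁻¹γ₋` not invertible, then `R(0) = δ − γ₋α₋⁻¹β₋` is
not invertible. (2) If `R(0)` is not invertible, then for every `Q` with `δ − γ₋Qβ₊`
invertible, `α₋°` is not invertible. -/
theorem alphaMcirc_not_invertible_iff_R0_not_invertible
    (δ : U →L[ℂ] U) (γp : Xp →L[ℂ] U) (αp : Xp →L[ℂ] Xp) (βp : U →L[ℂ] Xp)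
    (γm : Xm →L[ℂ] U) (αm : Xm →L[ℂ] Xm) (βm : U →L[ℂ] Xm)
    (hαp : spectrum ℂ αp ⊆ ball (0 : ℂ) 1) (hαm : spectrum ℂ αm ⊆ ball (0 : ℂ) 1)
    (hαmUnit : IsUnit αm) :
    ((∃ Q : Xp →L[ℂ] Xm, IsUnit (δ - (γm ∘L Q) ∘L βp) ∧
        ¬ IsUnit (αm - ((βm - (αm ∘L Q) ∘L βp) ∘L
          Ring.inverse (δ - (γm ∘L Q) ∘L βp)) ∘L γm)) →
      ¬ IsUnit (δ - (γm ∘L Ring.inverse αm) ∘L βm)) ∧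
    (¬ IsUnit (δ - (γm ∘L Ring.inverse αm) ∘L βm) →
      ∀ Q : Xp →L[ℂ] Xm, IsUnit (δ - (γm ∘L Q) ∘L βp) →
        ¬ IsUnit (αm - ((βm - (αm ∘L Q) ∘L βp) ∘L
          Ring.inverse (δ - (γm ∘L Q) ∘L βp)) ∘L γm)) := by
  have not_isUnit_iff (Q : Xp →L[ℂ] Xm) := alphaMcirc_not_invertible_iff_R0_not_invertible_general
    δ γm βm (Q ∘L βp) hαmUnit
  exact ⟨fun ⟨Q, hQ, h⟩ ↦ (not_isUnit_iff Q hQ).mp h, fun h Q hQ ↦ (not_isUnit_iff Q hQ).mpr h⟩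
end
end
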